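/- arXiv:math/0407355 — 5 statements merged into one kernel-verified Lean document; each statement's English description precedes it below -/
import Mathlib

section
/- Let V be a real inner product space with dim V = n ≥ 2, let p ∈ V be nonzero, set t = ‖p‖²/2, and let a₁, b₁, a₂, b₂ ∈ ℝ. Define the linear map J : V × V → V × V by J(X, P) = (−(a₂·P + b₂·⟨p,P⟩·p), a₁·X + b₁·⟨p,X⟩·p). Then J ∘ J = −id on V × V if and only if a₁·a₂ = 1 and (a₁ + 2t·b₁)·(a₂ + 2t·b₂) = 1. -/
open RealInnerProductSpace

/-!
The structure is `J (X, P) = (-(A₂ P), A₁ X)` with `Aᵢ = aᵢ • 1 + bᵢ • ⟪p, ·⟫ p`, so it squares to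
`-1` exactly when `A₁` and `A₂` are inverse to each other. Both operators act as a scalar on the
line spanned by `p`, namely `aᵢ + bᵢ ‖p‖²`, and as the scalar `aᵢ` on its orthogonal complement,
which is nonzero in dimension at least two. Hence `A₁ A₂ = 1` amounts to one equation for each of
the two eigenspaces.
-/

theorem apply_apply_eq_neg_iff_leftInverse_and_rightInverse {M N : Type*} [InvolutiveNeg M]
    [InvolutiveNeg N] {A : M → N} {B : N → M} (hA : A.Odd) {J : M × N → M × N}
    (hJ : ∀ x y, J (x, y) = (-B y, A x)) :
    (∀ z, J (J z) = -z) ↔ Function.LeftInverse B A ∧ Function.RightInverse B A := by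
  have hJJ (x : M) (y : N) : J (J (x, y)) = -(x, y) ↔ B (A x) = x ∧ A (B y) = y := by
    rw [hJ, hJ, hA, Prod.neg_mk, Prod.mk.injEq, neg_inj, neg_inj]
  simp only [Prod.forall, hJJ]
  exact ⟨fun h => ⟨fun x => (h x (A x)).1, fun y => (h (B y) y).2⟩,
    fun h x y => ⟨h.1 x, h.2 y⟩⟩

theorem leftInverse_and_rightInverse_iff_mul_eq_one {R M : Type*} [Semiring R] [AddCommMonoid M]
    [TopologicalSpace M] [Module R M] {A B : M →L[R] M} (hAB : Commute A B) :
    Function.LeftInverse B A ∧ Function.RightInverse B A ↔ A * B = 1 := by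
  have hleft : Function.LeftInverse B A ↔ B * A = 1 := by
    simp only [Function.LeftInverse, ContinuousLinearMap.ext_iff, mul_apply_eq_comp,
      one_apply_eq_self]
  have hright : Function.RightInverse B A ↔ A * B = 1 := by
    simp only [Function.RightInverse, Function.LeftInverse, ContinuousLinearMap.ext_iff,
      mul_apply_eq_comp, one_apply_eq_self]
  rw [hleft, hright, hAB.eq, and_self_iff]

section AxialOperator

variable {𝕜 V : Type*} [RCLike 𝕜] [NormedAddCommGroup V] [InnerProductSpace 𝕜 V]

theorem exists_ne_zero_inner_eq_zero (hV : 1 < Module.rank 𝕜 V) (p : V) :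
    ∃ q : V, q ≠ 0 ∧ inner 𝕜 p q = 0 := by
  have hspan : 𝕜 ∙ p ≠ ⊤ := by
    intro htop
    have hle : Module.rank 𝕜 (𝕜 ∙ p) ≤ 1 := (rank_span_le {p}).trans_eq (Cardinal.mk_singleton p)
    rw [htop, rank_top] at hle
    exact hle.not_gt hV
  obtain ⟨q, hq, hq0⟩ :=
    Submodule.exists_mem_ne_zero_of_ne_bot (mt Submodule.orthogonal_eq_bot_iff.mp hspan)
  exact ⟨q, hq0, Submodule.mem_orthogonal_singleton_iff_inner_right.mp hq⟩

/-- The operator `X ↦ a X + b ⟪p, X⟫ p` attached to the natural symmetric tensor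
`a g_{ij} + b p_i p_j`. Up to sign, both blocks of an almost complex structure of diagonal type
have this form. The inner product is linear in its second argument, so `p` stands in the first. -/
noncomputable def axialOperator (p : V) (a b : 𝕜) : V →L[𝕜] V :=
  a • 1 + b • InnerProductSpace.rankOne 𝕜 p p

theorem axialOperator_apply (p : V) (a b : 𝕜) (X : V) :
    axialOperator p a b X = a • X + (b * inner 𝕜 p X) • p := by
  simp [axialOperator, mul_smul]

theorem axialOperator_apply_self (p : V) (a b : 𝕜) :
    axialOperator p a b p = (a + b * (‖p‖ : 𝕜) ^ 2) • p := by
  rw [axialOperator_apply, inner_self_eq_norm_sq_to_K, add_smul]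

theorem axialOperator_apply_of_inner_eq_zero {p X : V} (h : inner 𝕜 p X = 0) (a b : 𝕜) :
    axialOperator p a b X = a • X := by
  rw [axialOperator_apply, h, mul_zero, zero_smul, add_zero]

theorem axialOperator_mul (p : V) (a b a' b' : 𝕜) :
    axialOperator p a b * axialOperator p a' b' =
      axialOperator p (a * a') (a * b' + b * a' + b * b' * (‖p‖ : 𝕜) ^ 2) := by
  ext X
  simp only [mul_apply_eq_comp, axialOperator_apply, inner_add_right,
    inner_smul_right, inner_self_eq_norm_sq_to_K]
  module

theorem commute_axialOperator (p : V) (a b a' b' : 𝕜) :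
    Commute (axialOperator p a b) (axialOperator p a' b') := by
  rw [commute_iff_eq, axialOperator_mul, axialOperator_mul]
  congr 1 <;> ring

theorem axialOperator_eq_one_iff (hV : 1 < Module.rank 𝕜 V) {p : V} {a b : 𝕜} :
    axialOperator p a b = 1 ↔ a = 1 ∧ a + b * (‖p‖ : 𝕜) ^ 2 = 1 := by
  constructor
  · intro h
    obtain ⟨q, hq, hpq⟩ := exists_ne_zero_inner_eq_zero hV p
    have ha : a = 1 := by
      have hfix : a • q = q := by
        rw [← axialOperator_apply_of_inner_eq_zero hpq a b, h, one_apply_eq_self]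
      exact smul_left_injective 𝕜 hq (hfix.trans (one_smul 𝕜 q).symm)
    refine ⟨ha, ?_⟩
    rcases eq_or_ne p 0 with rfl | hp
    · simpa using ha
    · have hfix : (a + b * (‖p‖ : 𝕜) ^ 2) • p = p := by
        rw [← axialOperator_apply_self, h, one_apply_eq_self]
      exact smul_left_injective 𝕜 hp (hfix.trans (one_smul 𝕜 p).symm)
  · rintro ⟨rfl, h⟩
    have hbp : b = 0 ∨ p = 0 := by simpa using h
    rcases hbp with rfl | rfl <;> simp [axialOperator]

theorem axialOperator_mul_eq_one_iff (hV : 1 < Module.rank 𝕜 V) {p : V} {a b a' b' : 𝕜} :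
    axialOperator p a b * axialOperator p a' b' = 1 ↔
      a * a' = 1 ∧ (a + b * (‖p‖ : 𝕜) ^ 2) * (a' + b' * (‖p‖ : 𝕜) ^ 2) = 1 := by
  have heigenvalue : a * a' + (a * b' + b * a' + b * b' * (‖p‖ : 𝕜) ^ 2) * (‖p‖ : 𝕜) ^ 2 =
      (a + b * (‖p‖ : 𝕜) ^ 2) * (a' + b' * (‖p‖ : 𝕜) ^ 2) := by ring
  rw [axialOperator_mul, axialOperator_eq_one_iff hV, heigenvalue]

end AxialOperator

theorem prop2_pointwise_general {𝕜 V : Type*} [RCLike 𝕜] [NormedAddCommGroup V]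
    [InnerProductSpace 𝕜 V] (hV : 1 < Module.rank 𝕜 V) (p : V) (t : 𝕜)
    (ht : t = (‖p‖ : 𝕜) ^ 2 / 2) (a₁ b₁ a₂ b₂ : 𝕜) (J : V × V → V × V)
    (hJ : ∀ X P : V, J (X, P) =
      (-(a₂ • P + (b₂ * inner 𝕜 p P) • p), a₁ • X + (b₁ * inner 𝕜 p X) • p)) :
    (∀ z : V × V, J (J z) = -z) ↔
      (a₁ * a₂ = 1 ∧ (a₁ + 2 * t * b₁) * (a₂ + 2 * t * b₂) = 1) := by
  have hJ_axial (X P : V) : J (X, P) = (-axialOperator p a₂ b₂ P, axialOperator p a₁ b₁ X) := by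
    rw [hJ, axialOperator_apply, axialOperator_apply]
  have hnorm : (‖p‖ : 𝕜) ^ 2 = 2 * t := by rw [ht, mul_div_cancel₀ _ two_ne_zero]
  have hodd : Function.Odd (axialOperator p a₁ b₁) := map_neg _
  rw [apply_apply_eq_neg_iff_leftInverse_and_rightInverse hodd hJ_axial,
    leftInverse_and_rightInverse_iff_mul_eq_one (commute_axialOperator p a₁ b₁ a₂ b₂),
    axialOperator_mul_eq_one_iff hV, hnorm, mul_comm b₁, mul_comm b₂]

/-- Proposition 2 (pointwise): the natural almost complex structure of diagonal type
`J(X,P) = (−(a₂P + b₂⟪p,P⟫p), a₁X + b₁⟪p,X⟫p)` satisfies `J ∘ J = −id` on `V × V`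
iff `a₁a₂ = 1` and `(a₁ + 2tb₁)(a₂ + 2tb₂) = 1`, where `t = ‖p‖²/2`. -/
theorem prop2_pointwise {V : Type*} [NormedAddCommGroup V] [InnerProductSpace ℝ V]
    (n : ℕ) (hn : 2 ≤ n) (hdim : Module.finrank ℝ V = n)
    (p : V) (hp : p ≠ 0) (t : ℝ) (ht : t = ‖p‖ ^ 2 / 2)
    (a₁ b₁ a₂ b₂ : ℝ) (J : V × V → V × V)
    (hJ : ∀ X P : V,
      J (X, P) = (-(a₂ • P + (b₂ * ⟪p, P⟫) • p), a₁ • X + (b₁ * ⟪p, X⟫) • p)) :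
    (∀ z : V × V, J (J z) = -z) ↔
      (a₁ * a₂ = 1 ∧ (a₁ + 2 * t * b₁) * (a₂ + 2 * t * b₂) = 1) := by
  have hV : 1 < Module.rank ℝ V := Module.lt_rank_of_lt_finrank (by rw [hdim]; exact_mod_cast hn)
  exact prop2_pointwise_general hV p t ht a₁ b₁ a₂ b₂ J hJ
end

section
/- Let V be a real inner product space with dim V = n ≥ 2, let A, c, t, λ, λ₁ be real numbers with A > 0, t > 0, λ > 0, 2c − A²·t·λ² > 0 and λ + 2t·λ₁ > 0, and let p ∈ V with ‖p‖² = 2t. Define a₁ = A·t·λ, b₁ = (c − A²·t·λ·(λ + t·λ₁))/(A·t·(λ + 2t·λ₁)), a₂ = 1/(A·t·λ), b₂ = −(c − A²·t·λ·(λ + t·λ₁))/(A·t²·λ·(2c − A²·t·λ²)), and the linear map J : V × V → V × V by J(X,P) = (−(a₂·P + b₂·⟨p,P⟩·p), a₁·X + b₁·⟨p,X⟩·p). Then J ∘ J = −id on V × V. -/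
/-!
`J` has the shape `(X, P) ↦ (-T P, S X)`, where `S` and `T` are scalars plus multiples of the same
rank-one operator `⟪p, ·⟫ p`, so `J ∘ J = -id` says that `S` and `T` are mutually inverse. On the
line of `p`, `S` has the eigenvalue `a₁ + 2 t b₁`, which for the given parameters is
`(2 c - A² t λ²) / (A (λ + 2 t λ₁))`, and `b₂` is exactly the coefficient which the
Sherman–Morrison formula gives for the inverse of `S`.
-/

open RealInnerProductSpace

section DiagonalStructure

variable {R M N : Type*} [Semiring R] [AddCommGroup M] [AddCommGroup N] [Module R M] [Module R N]

/-- The endomorphism of diagonal type `(X, P) ↦ (-T P, S X)` of `M × N`. It models an almost complex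
structure exchanging the horizontal distribution `M` and the vertical distribution `N`. -/
def diagonalStructure (S : M →ₗ[R] N) (T : N →ₗ[R] M) : M × N →ₗ[R] M × N :=
  (-(T ∘ₗ LinearMap.snd R M N)).prod (S ∘ₗ LinearMap.fst R M N)

@[simp]
theorem diagonalStructure_apply (S : M →ₗ[R] N) (T : N →ₗ[R] M) (z : M × N) :
    diagonalStructure S T z = (-T z.2, S z.1) :=
  rfl

theorem diagonalStructure_comp_self_eq_neg_id_iff {S : M →ₗ[R] N} {T : N →ₗ[R] M} :
    diagonalStructure S T ∘ₗ diagonalStructure S T = -LinearMap.id ↔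
      T ∘ₗ S = LinearMap.id ∧ S ∘ₗ T = LinearMap.id := by
  simp [LinearMap.ext_iff, Prod.ext_iff, forall_and]

end DiagonalStructure

section ScalarAddRankOne

variable {R V : Type*} [CommSemiring R] [AddCommMonoid V] [Module R V]

/-- The operator `X ↦ a X + b φ(X) p`, a scalar plus a rank-one operator. For `φ = ⟪p, ·⟫` these are
the blocks of the natural structures of diagonal type. -/
def scalarAddRankOne (φ : Module.Dual R V) (p : V) (a b : R) : V →ₗ[R] V :=
  a • LinearMap.id + b • φ.smulRight p

@[simp]
theorem scalarAddRankOne_apply (φ : Module.Dual R V) (p : V) (a b : R) (X : V) :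
    scalarAddRankOne φ p a b X = a • X + (b * φ X) • p := by
  simp [scalarAddRankOne, mul_smul]

@[simp]
theorem scalarAddRankOne_one_zero (φ : Module.Dual R V) (p : V) :
    scalarAddRankOne φ p 1 0 = LinearMap.id := by
  simp [scalarAddRankOne]

theorem scalarAddRankOne_comp (φ : Module.Dual R V) (p : V) (a b a' b' : R) :
    scalarAddRankOne φ p a b ∘ₗ scalarAddRankOne φ p a' b' =
      scalarAddRankOne φ p (a * a') (a * b' + b * a' + φ p * (b * b')) := by
  ext X
  simp only [LinearMap.comp_apply, scalarAddRankOne_apply, map_add, map_smul]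
  module

theorem scalarAddRankOne_comp_comm (φ : Module.Dual R V) (p : V) (a b a' b' : R) :
    scalarAddRankOne φ p a b ∘ₗ scalarAddRankOne φ p a' b' =
      scalarAddRankOne φ p a' b' ∘ₗ scalarAddRankOne φ p a b := by
  rw [scalarAddRankOne_comp, scalarAddRankOne_comp]
  congr 1 <;> ring

theorem scalarAddRankOne_comp_inv {K W : Type*} [Field K] [AddCommMonoid W] [Module K W]
    (φ : Module.Dual K W) (p : W) {a b : K} (ha : a ≠ 0) (hab : a + φ p * b ≠ 0) :
    scalarAddRankOne φ p a b ∘ₗ scalarAddRankOne φ p a⁻¹ (-b / (a * (a + φ p * b))) =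
      LinearMap.id := by
  set b' := -b / (a * (a + φ p * b)) with hb'
  have hmul : (a + φ p * b) * b' = -(b * a⁻¹) := by
    rw [hb', ← div_div, mul_div_cancel₀ _ hab, div_eq_mul_inv, neg_mul]
  have hcoeff : a * b' + b * a⁻¹ + φ p * (b * b') = 0 := by
    linear_combination hmul
  rw [scalarAddRankOne_comp, mul_inv_cancel₀ ha, hcoeff, scalarAddRankOne_one_zero]

end ScalarAddRankOne

theorem diagonalStructure_scalarAddRankOne_comp_self {K V : Type*} [Field K] [AddCommGroup V]
    [Module K V] (φ : Module.Dual K V) (p : V) {a b : K} (ha : a ≠ 0) (hab : a + φ p * b ≠ 0) :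
    let J := diagonalStructure (scalarAddRankOne φ p a b)
      (scalarAddRankOne φ p a⁻¹ (-b / (a * (a + φ p * b))))
    J ∘ₗ J = -LinearMap.id :=
  have hinv := scalarAddRankOne_comp_inv φ p ha hab
  diagonalStructure_comp_self_eq_neg_id_iff.2
    ⟨(scalarAddRankOne_comp_comm ..).trans hinv, hinv⟩

section Formula13

variable {K : Type*} [Field K] {A c t lam lam₁ a₁ b₁ : K}

theorem formula13_eigenvalue (hA : A ≠ 0) (ht : t ≠ 0) (hden : lam + 2 * t * lam₁ ≠ 0)
    (ha₁ : a₁ = A * t * lam)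
    (hb₁ : b₁ = (c - A ^ 2 * t * lam * (lam + t * lam₁)) / (A * t * (lam + 2 * t * lam₁))) :
    a₁ + 2 * t * b₁ = (2 * c - A ^ 2 * t * lam ^ 2) / (A * (lam + 2 * t * lam₁)) := by
  have hb₁_mul :
      b₁ * (A * t * (lam + 2 * t * lam₁)) = c - A ^ 2 * t * lam * (lam + t * lam₁) := by
    rw [hb₁, div_mul_cancel₀ _ (mul_ne_zero (mul_ne_zero hA ht) hden)]
  rw [eq_div_iff (mul_ne_zero hA hden), ha₁]
  linear_combination 2 * hb₁_mul

theorem formula13_inverse_coeff (hA : A ≠ 0) (ht : t ≠ 0) (hden : lam + 2 * t * lam₁ ≠ 0)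
    (ha₁ : a₁ = A * t * lam)
    (hb₁ : b₁ = (c - A ^ 2 * t * lam * (lam + t * lam₁)) / (A * t * (lam + 2 * t * lam₁))) :
    -b₁ / (a₁ * (a₁ + 2 * t * b₁)) =
      -(c - A ^ 2 * t * lam * (lam + t * lam₁)) /
        (A * t ^ 2 * lam * (2 * c - A ^ 2 * t * lam ^ 2)) := by
  rw [formula13_eigenvalue hA ht hden ha₁ hb₁, ha₁, hb₁]
  -- `field_simp` would renormalize the sums, after which `hden` no longer matches.
  generalize c - A ^ 2 * t * lam * (lam + t * lam₁) = N
  generalize 2 * c - A ^ 2 * t * lam ^ 2 = D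
  generalize lam + 2 * t * lam₁ = E at hden ⊢
  field_simp

theorem formula13_almost_complex_general {V : Type*} [AddCommGroup V] [Module K V]
    (φ : Module.Dual K V) (p : V) (hA : A ≠ 0) (ht : t ≠ 0) (hlam : lam ≠ 0)
    (hc : 2 * c - A ^ 2 * t * lam ^ 2 ≠ 0) (hden : lam + 2 * t * lam₁ ≠ 0) (hp : φ p = 2 * t)
    {a₂ b₂ : K} (ha₁ : a₁ = A * t * lam)
    (hb₁ : b₁ = (c - A ^ 2 * t * lam * (lam + t * lam₁)) / (A * t * (lam + 2 * t * lam₁)))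
    (ha₂ : a₂ = 1 / (A * t * lam))
    (hb₂ : b₂ = -(c - A ^ 2 * t * lam * (lam + t * lam₁)) /
      (A * t ^ 2 * lam * (2 * c - A ^ 2 * t * lam ^ 2)))
    {J : V × V → V × V}
    (hJ : ∀ X P : V, J (X, P) = (-(a₂ • P + (b₂ * φ P) • p), a₁ • X + (b₁ * φ X) • p))
    (z : V × V) : J (J z) = -z := by
  have ha₁_ne : a₁ ≠ 0 := ha₁ ▸ mul_ne_zero (mul_ne_zero hA ht) hlam
  have heigen_ne : a₁ + φ p * b₁ ≠ 0 := by
    rw [hp, formula13_eigenvalue hA ht hden ha₁ hb₁]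
    exact div_ne_zero hc (mul_ne_zero hA hden)
  have ha₂_inv : a₂ = a₁⁻¹ := by rw [ha₂, ha₁, one_div]
  have hb₂_inv : b₂ = -b₁ / (a₁ * (a₁ + φ p * b₁)) := by
    rw [hb₂, hp, formula13_inverse_coeff hA ht hden ha₁ hb₁]
  have hJ_eq (z : V × V) :
      J z = diagonalStructure (scalarAddRankOne φ p a₁ b₁) (scalarAddRankOne φ p a₂ b₂) z := by
    rw [diagonalStructure_apply, scalarAddRankOne_apply, scalarAddRankOne_apply, ← hJ]
  rw [hJ_eq, hJ_eq, ha₂_inv, hb₂_inv]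
  exact LinearMap.congr_fun (diagonalStructure_scalarAddRankOne_comp_self φ p ha₁_ne heigen_ne) z

end Formula13

/-- The natural complex structures of formula (13) are almost complex structures:
with the explicit parameters `a₁, b₁, a₂, b₂` of Theorem 4, `J ∘ J = −id` on `V × V`. -/
theorem formula13_almost_complex {V : Type*} [NormedAddCommGroup V] [InnerProductSpace ℝ V]
    (n : ℕ) (hn : 2 ≤ n) (hdim : Module.finrank ℝ V = n)
    (A c t lam lam₁ : ℝ) (hA : 0 < A) (ht : 0 < t) (hlam : 0 < lam)
    (hc : 0 < 2 * c - A ^ 2 * t * lam ^ 2) (hden : 0 < lam + 2 * t * lam₁)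
    (p : V) (hp : ‖p‖ ^ 2 = 2 * t)
    (a₁ b₁ a₂ b₂ : ℝ)
    (ha₁ : a₁ = A * t * lam)
    (hb₁ : b₁ = (c - A ^ 2 * t * lam * (lam + t * lam₁)) / (A * t * (lam + 2 * t * lam₁)))
    (ha₂ : a₂ = 1 / (A * t * lam))
    (hb₂ : b₂ = -(c - A ^ 2 * t * lam * (lam + t * lam₁)) /
      (A * t ^ 2 * lam * (2 * c - A ^ 2 * t * lam ^ 2)))
    (J : V × V → V × V)
    (hJ : ∀ X P : V,
      J (X, P) = (-(a₂ • P + (b₂ * ⟪p, P⟫) • p), a₁ • X + (b₁ * ⟪p, X⟫) • p)) :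
    ∀ z : V × V, J (J z) = -z := by
  exact formula13_almost_complex_general (innerₗ V p) p hA.ne' ht.ne' hlam.ne' hc.ne' hden.ne'
    ((real_inner_self_eq_norm_sq p).trans hp) ha₁ hb₁ ha₂ hb₂ hJ
end

section
/- Let V be a real inner product space, let p ∈ V, set t = ‖p‖²/2, and let a₁, b₁, a₂, b₂, λ, μ ∈ ℝ with a₁·a₂ = 1 and (a₁ + 2t·b₁)·(a₂ + 2t·b₂) = 1. Define c₁ = λ·a₁, c₂ = λ·a₂, and d₁, d₂ by c₁ + 2t·d₁ = (λ + 2t·μ)·(a₁ + 2t·b₁) and c₂ + 2t·d₂ = (λ + 2t·μ)·(a₂ + 2t·b₂) (assuming t > 0 so d₁, d₂ are determined). Define J : V × V → V × V by J(X,P) = (−(a₂·P + b₂·⟨p,P⟩·p), a₁·X + b₁·⟨p,X⟩·p) and G((X₁,P₁),(X₂,P₂)) = c₁·⟨X₁,X₂⟩ + d₁·⟨p,X₁⟩·⟨p,X₂⟩ + c₂·⟨P₁,P₂⟩ + d₂·⟨p,P₁⟩·⟨p,P₂⟩. Then the 2-form φ(x,y) = G(x, Jy) satisfies φ((X₁,P₁),(X₂,P₂))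 = λ·(⟨P₁,X₂⟩ − ⟨X₁,P₂⟩) + μ·(⟨p,P₁⟩·⟨p,X₂⟩ − ⟨p,X₁⟩·⟨p,P₂⟩) for all (X₁,P₁), (X₂,P₂) ∈ V × V. -/
open RealInnerProductSpace

/-!
An operator `x ↦ a • x + (b * ⟪p, x⟫) • p` acts as `a` on the orthogonal complement of `p` and
as `a + b * ‖p‖ ^ 2` on the line through `p`. Writing `A₁, A₂, C₁, C₂` for the operators of this
shape with the parameters of `J` and `G`, and `L` for the one with parameters `lam, μ`, the
hypotheses on the parameters say eigenvalue by eigenvalue that `A₁ C₂ = A₂ C₁ = L`. Since `A₁` and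
`A₂` are symmetric, `φ` pairs the horizontal and the vertical components through `L` alone.
-/

section DiagonalOperator

variable {𝕜 V : Type*} [RCLike 𝕜] [SeminormedAddCommGroup V] [InnerProductSpace 𝕜 V]

/-- The operator of diagonal type `x ↦ a • x + (b * ⟪p, x⟫) • p`: the coefficient tensor
`a g + b p ⊗ p`, with one index raised, of the blocks of the structures `J` and `G`. -/
noncomputable def diagonalOperator (p : V) (a b : 𝕜) : V →L[𝕜] V :=
  a • 1 + b • InnerProductSpace.rankOne 𝕜 p p

theorem diagonalOperator_apply (p : V) (a b : 𝕜) (x : V) :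
    diagonalOperator p a b x = a • x + (b * inner 𝕜 p x) • p := by
  simp [diagonalOperator, mul_smul]

theorem isSymmetric_diagonalOperator (p : V) {a b : 𝕜} (ha : starRingEnd 𝕜 a = a)
    (hb : starRingEnd 𝕜 b = b) : (diagonalOperator p a b).toLinearMap.IsSymmetric :=
  (LinearMap.IsSymmetric.one.smul ha).add
    ((InnerProductSpace.isSymmetric_rankOne_self p).smul hb)

theorem diagonalOperator_mul (p : V) (a b a' b' : 𝕜) :
    diagonalOperator p a b * diagonalOperator p a' b' =
      diagonalOperator p (a * a') (a * b' + b * a' + b * b' * inner 𝕜 p p) := by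
  ext x
  simp only [mul_apply_eq_comp, diagonalOperator_apply, inner_add_right, inner_smul_right]
  module

theorem diagonalOperator_mul_of_eigenvalues {p : V} (hp : inner 𝕜 p p ≠ (0 : 𝕜))
    {a b a' b' a'' b'' : 𝕜}
    (hperp : a * a' = a'')
    (hline : (a + inner 𝕜 p p * b) * (a' + inner 𝕜 p p * b') = a'' + inner 𝕜 p p * b'') :
    diagonalOperator p a b * diagonalOperator p a' b' = diagonalOperator p a'' b'' := by
  have hb : a * b' + b * a' + b * b' * inner 𝕜 p p = b'' := by
    apply mul_left_cancel₀ hp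
    linear_combination hline - hperp
  rw [diagonalOperator_mul, hperp, hb]

end DiagonalOperator

section RealDiagonalOperator

variable {V : Type*} [SeminormedAddCommGroup V] [InnerProductSpace ℝ V]

theorem real_inner_diagonalOperator_left (p : V) (a b : ℝ) (x y : V) :
    ⟪diagonalOperator p a b x, y⟫ = a * ⟪x, y⟫ + b * ⟪p, x⟫ * ⟪p, y⟫ := by
  rw [diagonalOperator_apply, inner_add_left, real_inner_smul_left, real_inner_smul_left]

theorem real_inner_diagonalOperator_right_eq_mul (p : V) (a b : ℝ) (C : V →L[ℝ] V) (x y : V) :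
    ⟪C x, diagonalOperator p a b y⟫ = ⟪(diagonalOperator p a b * C) x, y⟫ :=
  (isSymmetric_diagonalOperator p (conj_trivial a) (conj_trivial b) (C x) y).symm

end RealDiagonalOperator

/-- Proposition 6 (pointwise): the fundamental 2-form `φ(x,y) = G(x, Jy)` of the
Hermitian structure `(G,J)` is given by
`φ((X₁,P₁),(X₂,P₂)) = λ(⟪P₁,X₂⟫ − ⟪X₁,P₂⟫) + μ(⟪p,P₁⟫⟪p,X₂⟫ − ⟪p,X₁⟫⟪p,P₂⟫)`. -/
theorem prop6_fundamental_two_form {V : Type*} [NormedAddCommGroup V]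
    [InnerProductSpace ℝ V]
    (p : V) (t : ℝ) (ht : t = ‖p‖ ^ 2 / 2) (htpos : 0 < t)
    (a₁ b₁ a₂ b₂ lam μ c₁ d₁ c₂ d₂ : ℝ)
    (h1 : a₁ * a₂ = 1) (h2 : (a₁ + 2 * t * b₁) * (a₂ + 2 * t * b₂) = 1)
    (hc₁ : c₁ = lam * a₁) (hc₂ : c₂ = lam * a₂)
    (hd₁ : c₁ + 2 * t * d₁ = (lam + 2 * t * μ) * (a₁ + 2 * t * b₁))
    (hd₂ : c₂ + 2 * t * d₂ = (lam + 2 * t * μ) * (a₂ + 2 * t * b₂))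
    (J : V × V → V × V)
    (hJ : ∀ X P : V,
      J (X, P) = (-(a₂ • P + (b₂ * ⟪p, P⟫) • p), a₁ • X + (b₁ * ⟪p, X⟫) • p))
    (G : V × V → V × V → ℝ)
    (hG : ∀ X₁ P₁ X₂ P₂ : V, G (X₁, P₁) (X₂, P₂) =
      c₁ * ⟪X₁, X₂⟫ + d₁ * ⟪p, X₁⟫ * ⟪p, X₂⟫ +
      c₂ * ⟪P₁, P₂⟫ + d₂ * ⟪p, P₁⟫ * ⟪p, P₂⟫)
    (φ : V × V → V × V → ℝ)
    (hφ : ∀ x y : V × V, φ x y = G x (J y)) :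
    ∀ X₁ P₁ X₂ P₂ : V, φ (X₁, P₁) (X₂, P₂) =
      lam * (⟪P₁, X₂⟫ - ⟪X₁, P₂⟫) +
      μ * (⟪p, P₁⟫ * ⟪p, X₂⟫ - ⟪p, X₁⟫ * ⟪p, P₂⟫) := by
  intro X₁ P₁ X₂ P₂
  have hpp : ⟪p, p⟫ = 2 * t := by rw [real_inner_self_eq_norm_sq, ht]; ring
  have hp : ⟪p, p⟫ ≠ 0 := by rw [hpp]; positivity
  have hA₁C₂ : diagonalOperator p a₁ b₁ * diagonalOperator p c₂ d₂ = diagonalOperator p lam μ := by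
    apply diagonalOperator_mul_of_eigenvalues hp
    · linear_combination a₁ * hc₂ + lam * h1
    · rw [hpp]; linear_combination (a₁ + 2 * t * b₁) * hd₂ + (lam + 2 * t * μ) * h2
  have hA₂C₁ : diagonalOperator p a₂ b₂ * diagonalOperator p c₁ d₁ = diagonalOperator p lam μ := by
    apply diagonalOperator_mul_of_eigenvalues hp
    · linear_combination a₂ * hc₁ + lam * h1
    · rw [hpp]; linear_combination (a₂ + 2 * t * b₂) * hd₁ + (lam + 2 * t * μ) * h2
  calc φ (X₁, P₁) (X₂, P₂)
      = ⟪diagonalOperator p c₂ d₂ P₁, diagonalOperator p a₁ b₁ X₂⟫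
          - ⟪diagonalOperator p c₁ d₁ X₁, diagonalOperator p a₂ b₂ P₂⟫ := by
        rw [hφ, hJ, hG, ← diagonalOperator_apply, ← diagonalOperator_apply,
          real_inner_diagonalOperator_left, real_inner_diagonalOperator_left,
          inner_neg_right, inner_neg_right]
        ring
    _ = ⟪diagonalOperator p lam μ P₁, X₂⟫ - ⟪diagonalOperator p lam μ X₁, P₂⟫ := by
        simp only [real_inner_diagonalOperator_right_eq_mul, hA₁C₂, hA₂C₁]
    _ = lam * (⟪P₁, X₂⟫ - ⟪X₁, P₂⟫) + μ * (⟪p, P₁⟫ * ⟪p, X₂⟫ - ⟪p, X₁⟫ * ⟪p, P₂⟫) := by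
        rw [real_inner_diagonalOperator_left, real_inner_diagonalOperator_left]
        ring
end

section
/- Let V be a real inner product space with dim V = n ≥ 2, let A, c, t, λ, λ₁ be real numbers with A > 0, t > 0, λ > 0, 2c − A²·t·λ² > 0 and λ + 2t·λ₁ > 0, and let p ∈ V with ‖p‖² = 2t. Define J : V × V → V × V by J(X,P) = (−(a₂·P + b₂·⟨p,P⟩·p), a₁·X + b₁·⟨p,X⟩·p) with a₁ = A·t·λ, b₁ = (c − A²·t·λ·(λ + t·λ₁))/(A·t·(λ + 2t·λ₁)), a₂ = 1/(A·t·λ), b₂ = −(c − A²·t·λ·(λ + t·λ₁))/(A·t²·λ·(2c − A²·t·λ²)), and define the bilinear form G on V × V by G((X₁,P₁),(X₂,P₂)) = c₁·⟨X₁,X₂⟩ + d₁·⟨p,X₁⟩·⟨p,X₂⟩ + c₂·⟨P₁,P₂⟩ + d₂·⟨p,P₁⟩·⟨p,P₂⟩ with c₁ = A·t·λ², d₁ = (c − A²·t·λ²)/(A·t), c₂ = 1/(A·t), d₂ = −(c − A²·t·(λ² + 2t·λ₁·(λ + t·λ₁)))/(A·t²·(2c − A²·t·λ²)). Then G(Jx,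 Jy) = G(x, y) for all x, y ∈ V × V. -/
open RealInnerProductSpace

/-!
The endomorphisms `X ↦ a X + b B(p, X) p` form a commutative algebra of `B`-self-adjoint operators.
In it `J` is given by operators `M₁` (horizontal to vertical) and `M₂` (vertical to horizontal) with
`M₂ M₁ = 1`, and the two blocks of `G` are `L M₁` and `L M₂`, where the proportionality factor `L`
has the coefficients `a = λ` and `b = λ₁`. Since `J` exchanges the factors of `V × V`, invariance of
`G` amounts to `M₁ (L M₂) M₁ = L M₁` and `M₂ (L M₁) M₂ = L M₂`.
-/

section Axial

variable {R V : Type*} [CommRing R] [AddCommGroup V] [Module R V]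
  (B : LinearMap.BilinForm R V) (p : V)

/-- The endomorphism `X ↦ a X + b B(p, X) p`, which gives the blocks of lifts of diagonal type
at the cotangent vector `p`. -/
def axialEnd (a b : R) : Module.End R V :=
  a • 1 + b • (B p).smulRight p

lemma axialEnd_apply (a b : R) (X : V) : axialEnd B p a b X = a • X + (b * B p X) • p := by
  simp [axialEnd, mul_smul]

lemma axialEnd_one_zero : axialEnd B p 1 0 = 1 := by
  simp [axialEnd]

lemma axialEnd_mul (a b a' b' : R) :
    axialEnd B p a b * axialEnd B p a' b' =
      axialEnd B p (a * a') (a * b' + b * (a' + B p p * b')) := by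
  ext X
  simp only [Module.End.mul_apply, axialEnd_apply, map_add, map_smul]
  module

lemma axialEnd_commute (a b a' b' : R) :
    Commute (axialEnd B p a b) (axialEnd B p a' b') := by
  rw [commute_iff_eq, axialEnd_mul, axialEnd_mul]
  congr 1 <;> ring

variable {B}

lemma apply_axialEnd (hB : B.IsSymm) (a b : R) (X Y : V) :
    B X (axialEnd B p a b Y) = a * B X Y + b * B p X * B p Y := by
  have hXp : B X p = B p X := hB.eq X p
  simp only [axialEnd_apply, map_add, map_smul, smul_eq_mul, hXp]
  ring

lemma axialEnd_isSelfAdjoint (hB : B.IsSymm) (a b : R) : B.IsSelfAdjoint (axialEnd B p a b) := by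
  intro X Y
  have hswap : B (axialEnd B p a b X) Y = B Y (axialEnd B p a b X) := hB.eq _ _
  have hXY : B Y X = B X Y := hB.eq Y X
  rw [hswap, apply_axialEnd p hB, apply_axialEnd p hB, hXY]
  ring

end Axial

section Diagonal

variable {R V : Type*} [CommRing R] [AddCommGroup V] [Module R V]

/-- The endomorphism `(X, P) ↦ (-M₂ P, M₁ X)` of `V × V`: the almost complex structure of diagonal
type with blocks `M₁` and `M₂`. It squares to `-1` exactly when `M₁` and `M₂` are mutually inverse,
which the definition does not demand. -/
def diagonalAlmostComplex (M₁ M₂ : Module.End R V) : Module.End R (V × V) :=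
  (-(M₂ ∘ₗ LinearMap.snd R V V)).prod (M₁ ∘ₗ LinearMap.fst R V V)

lemma diagonalAlmostComplex_apply (M₁ M₂ : Module.End R V) (X P : V) :
    diagonalAlmostComplex M₁ M₂ (X, P) = (-M₂ P, M₁ X) :=
  rfl

/-- The bilinear form `B(X₁, N₁ X₂) + B(P₁, N₂ P₂)` on `V × V`: the metric of diagonal type whose
horizontal and vertical blocks are represented by `N₁` and `N₂` with respect to `B`. -/
def diagonalForm (B : LinearMap.BilinForm R V) (N₁ N₂ : Module.End R V) :
    LinearMap.BilinForm R (V × V) :=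
  B.compl₁₂ (LinearMap.fst R V V) (N₁ ∘ₗ LinearMap.fst R V V) +
    B.compl₁₂ (LinearMap.snd R V V) (N₂ ∘ₗ LinearMap.snd R V V)

lemma diagonalForm_apply (B : LinearMap.BilinForm R V) (N₁ N₂ : Module.End R V)
    (X₁ P₁ X₂ P₂ : V) :
    diagonalForm B N₁ N₂ (X₁, P₁) (X₂, P₂) = B X₁ (N₁ X₂) + B P₁ (N₂ P₂) :=
  rfl

variable {B : LinearMap.BilinForm R V} {M₁ M₂ : Module.End R V}

lemma diagonalForm_diagonalAlmostComplex (hM₁ : B.IsSelfAdjoint M₁) (hM₂ : B.IsSelfAdjoint M₂)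
    (N₁ N₂ : Module.End R V) (x y : V × V) :
    diagonalForm B N₁ N₂ (diagonalAlmostComplex M₁ M₂ x) (diagonalAlmostComplex M₁ M₂ y) =
      diagonalForm B (M₁ * N₂ * M₁) (M₂ * N₁ * M₂) x y := by
  obtain ⟨X₁, P₁⟩ := x
  obtain ⟨X₂, P₂⟩ := y
  simp only [diagonalAlmostComplex_apply, diagonalForm_apply, map_neg, LinearMap.neg_apply,
    neg_neg, Module.End.mul_apply, hM₁ X₁, hM₂ P₁]
  exact add_comm _ _

theorem diagonalForm_diagonalAlmostComplex_of_proportional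
    (hM₁ : B.IsSelfAdjoint M₁) (hM₂ : B.IsSelfAdjoint M₂) (hM : M₂ * M₁ = 1)
    {L : Module.End R V} (hL : Commute L M₁) (x y : V × V) :
    diagonalForm B (L * M₁) (L * M₂)
        (diagonalAlmostComplex M₁ M₂ x) (diagonalAlmostComplex M₁ M₂ y) =
      diagonalForm B (L * M₁) (L * M₂) x y := by
  have horizontal : M₁ * (L * M₂) * M₁ = L * M₁ := by
    rw [mul_assoc, mul_assoc L, hM, mul_one, hL.eq]
  have vertical : M₂ * (L * M₁) * M₂ = L * M₂ := by
    rw [hL.eq, ← mul_assoc M₂, hM, one_mul]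
  rw [diagonalForm_diagonalAlmostComplex hM₁ hM₂, horizontal, vertical]

theorem diagonalForm_axialEnd_diagonalAlmostComplex {B : LinearMap.BilinForm R V} (hB : B.IsSymm)
    {p : V} {a₁ b₁ a₂ b₂ c₁ d₁ c₂ d₂ lam mu : R}
    (haa : a₂ * a₁ = 1) (hab : a₂ * b₁ + b₂ * (a₁ + B p p * b₁) = 0)
    (hc₁ : c₁ = lam * a₁) (hd₁ : d₁ = lam * b₁ + mu * (a₁ + B p p * b₁))
    (hc₂ : c₂ = lam * a₂) (hd₂ : d₂ = lam * b₂ + mu * (a₂ + B p p * b₂)) (x y : V × V) :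
    diagonalForm B (axialEnd B p c₁ d₁) (axialEnd B p c₂ d₂)
        (diagonalAlmostComplex (axialEnd B p a₁ b₁) (axialEnd B p a₂ b₂) x)
        (diagonalAlmostComplex (axialEnd B p a₁ b₁) (axialEnd B p a₂ b₂) y) =
      diagonalForm B (axialEnd B p c₁ d₁) (axialEnd B p c₂ d₂) x y := by
  have hM : axialEnd B p a₂ b₂ * axialEnd B p a₁ b₁ = 1 := by
    rw [axialEnd_mul, haa, hab, axialEnd_one_zero]
  have hN₁ : axialEnd B p c₁ d₁ = axialEnd B p lam mu * axialEnd B p a₁ b₁ := by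
    rw [axialEnd_mul, hc₁, hd₁]
  have hN₂ : axialEnd B p c₂ d₂ = axialEnd B p lam mu * axialEnd B p a₂ b₂ := by
    rw [axialEnd_mul, hc₂, hd₂]
  rw [hN₁, hN₂]
  exact diagonalForm_diagonalAlmostComplex_of_proportional (axialEnd_isSelfAdjoint p hB a₁ b₁)
    (axialEnd_isSelfAdjoint p hB a₂ b₂) hM (axialEnd_commute B p lam mu a₁ b₁) x y

end Diagonal

section RadialEigenvalues

variable {K : Type*} [Field K] {A c t lam lam₁ : K}

-- `axialEnd B p a b` scales `p` by `a + b * B p p`, here with `B p p = 2 * t`.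
lemma radialEigenvalue_horizontal_to_vertical (hA : A ≠ 0) (ht : t ≠ 0)
    (hden : lam + 2 * t * lam₁ ≠ 0) :
    A * t * lam +
        2 * t * ((c - A ^ 2 * t * lam * (lam + t * lam₁)) / (A * t * (lam + 2 * t * lam₁))) =
      (2 * c - A ^ 2 * t * lam ^ 2) / (A * (lam + 2 * t * lam₁)) := by
  generalize hD : lam + 2 * t * lam₁ = D at hden ⊢
  field_simp
  rw [← hD]
  ring

lemma radialEigenvalue_vertical_to_horizontal (hA : A ≠ 0) (ht : t ≠ 0) (hlam : lam ≠ 0)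
    (hc : 2 * c - A ^ 2 * t * lam ^ 2 ≠ 0) :
    1 / (A * t * lam) +
        2 * t * (-(c - A ^ 2 * t * lam * (lam + t * lam₁)) /
          (A * t ^ 2 * lam * (2 * c - A ^ 2 * t * lam ^ 2))) =
      A * (lam + 2 * t * lam₁) / (2 * c - A ^ 2 * t * lam ^ 2) := by
  field_simp
  ring

end RadialEigenvalues

theorem theorem9_hermitian_general {K V : Type*} [Field K] [AddCommGroup V] [Module K V]
    {B : LinearMap.BilinForm K V} (hB : B.IsSymm)
    {A c t lam lam₁ : K} (hA : A ≠ 0) (ht : t ≠ 0) (hlam : lam ≠ 0)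
    (hc : 2 * c - A ^ 2 * t * lam ^ 2 ≠ 0) (hden : lam + 2 * t * lam₁ ≠ 0)
    {p : V} (hp : B p p = 2 * t)
    {a₁ b₁ a₂ b₂ c₁ d₁ c₂ d₂ : K}
    (ha₁ : a₁ = A * t * lam)
    (hb₁ : b₁ = (c - A ^ 2 * t * lam * (lam + t * lam₁)) / (A * t * (lam + 2 * t * lam₁)))
    (ha₂ : a₂ = 1 / (A * t * lam))
    (hb₂ : b₂ = -(c - A ^ 2 * t * lam * (lam + t * lam₁)) /
      (A * t ^ 2 * lam * (2 * c - A ^ 2 * t * lam ^ 2)))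
    (hc₁ : c₁ = A * t * lam ^ 2)
    (hd₁ : d₁ = (c - A ^ 2 * t * lam ^ 2) / (A * t))
    (hc₂ : c₂ = 1 / (A * t))
    (hd₂ : d₂ = -(c - A ^ 2 * t * (lam ^ 2 + 2 * t * lam₁ * (lam + t * lam₁))) /
      (A * t ^ 2 * (2 * c - A ^ 2 * t * lam ^ 2)))
    {J : V × V → V × V}
    (hJ : ∀ X P : V,
      J (X, P) = (-(a₂ • P + (b₂ * B p P) • p), a₁ • X + (b₁ * B p X) • p))
    {G : V × V → V × V → K}
    (hG : ∀ X₁ P₁ X₂ P₂ : V, G (X₁, P₁) (X₂, P₂) =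
      c₁ * B X₁ X₂ + d₁ * B p X₁ * B p X₂ +
      c₂ * B P₁ P₂ + d₂ * B p P₁ * B p P₂)
    (x y : V × V) : G (J x) (J y) = G x y := by
  have hα₁ : a₁ + 2 * t * b₁ = (2 * c - A ^ 2 * t * lam ^ 2) / (A * (lam + 2 * t * lam₁)) :=
    ha₁ ▸ hb₁ ▸ radialEigenvalue_horizontal_to_vertical hA ht hden
  have hα₂ : a₂ + 2 * t * b₂ = A * (lam + 2 * t * lam₁) / (2 * c - A ^ 2 * t * lam ^ 2) :=
    ha₂ ▸ hb₂ ▸ radialEigenvalue_vertical_to_horizontal hA ht hlam hc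
  have hJ_eq (z) : J z = diagonalAlmostComplex (axialEnd B p a₁ b₁) (axialEnd B p a₂ b₂) z := by
    rw [← Prod.mk.eta (p := z), hJ, diagonalAlmostComplex_apply, axialEnd_apply, axialEnd_apply]
  have hG_eq (z w) : G z w = diagonalForm B (axialEnd B p c₁ d₁) (axialEnd B p c₂ d₂) z w := by
    rw [← Prod.mk.eta (p := z), ← Prod.mk.eta (p := w), hG, diagonalForm_apply,
      apply_axialEnd p hB, apply_axialEnd p hB]
    ring
  rw [hG_eq, hG_eq, hJ_eq, hJ_eq]
  generalize hD : lam + 2 * t * lam₁ = D at hden hb₁ hα₁ hα₂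
  generalize hE : 2 * c - A ^ 2 * t * lam ^ 2 = E at hc hb₂ hd₂ hα₁ hα₂
  apply diagonalForm_axialEnd_diagonalAlmostComplex hB (lam := lam) (mu := lam₁)
  case haa => rw [ha₁, ha₂]; field_simp
  case hab => rw [hp, hα₁, ha₂, hb₁, hb₂]; field_simp; ring
  case hc₁ => rw [hc₁, ha₁]; ring
  case hd₁ => rw [hp, hα₁, hd₁, hb₁]; field_simp; rw [← hD, ← hE]; ring
  case hc₂ => rw [hc₂, ha₂]; field_simp
  case hd₂ => rw [hp, hα₂, hd₂, hb₂]; field_simp; rw [← hD]; ring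

/-- Pointwise Hermitian property of the pair `(G,J)` of Theorem 9: the Kähler metric `G`
of formula (24) is Hermitian with respect to the complex structure `J` of formula (13). -/
theorem theorem9_hermitian {V : Type*} [NormedAddCommGroup V] [InnerProductSpace ℝ V]
    (n : ℕ) (hn : 2 ≤ n) (hdim : Module.finrank ℝ V = n)
    (A c t lam lam₁ : ℝ) (hA : 0 < A) (ht : 0 < t) (hlam : 0 < lam)
    (hc : 0 < 2 * c - A ^ 2 * t * lam ^ 2) (hden : 0 < lam + 2 * t * lam₁)
    (p : V) (hp : ‖p‖ ^ 2 = 2 * t)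
    (a₁ b₁ a₂ b₂ c₁ d₁ c₂ d₂ : ℝ)
    (ha₁ : a₁ = A * t * lam)
    (hb₁ : b₁ = (c - A ^ 2 * t * lam * (lam + t * lam₁)) / (A * t * (lam + 2 * t * lam₁)))
    (ha₂ : a₂ = 1 / (A * t * lam))
    (hb₂ : b₂ = -(c - A ^ 2 * t * lam * (lam + t * lam₁)) /
      (A * t ^ 2 * lam * (2 * c - A ^ 2 * t * lam ^ 2)))
    (hc₁ : c₁ = A * t * lam ^ 2)
    (hd₁ : d₁ = (c - A ^ 2 * t * lam ^ 2) / (A * t))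
    (hc₂ : c₂ = 1 / (A * t))
    (hd₂ : d₂ = -(c - A ^ 2 * t * (lam ^ 2 + 2 * t * lam₁ * (lam + t * lam₁))) /
      (A * t ^ 2 * (2 * c - A ^ 2 * t * lam ^ 2)))
    (J : V × V → V × V)
    (hJ : ∀ X P : V,
      J (X, P) = (-(a₂ • P + (b₂ * ⟪p, P⟫) • p), a₁ • X + (b₁ * ⟪p, X⟫) • p))
    (G : V × V → V × V → ℝ)
    (hG : ∀ X₁ P₁ X₂ P₂ : V, G (X₁, P₁) (X₂, P₂) =
      c₁ * ⟪X₁, X₂⟫ + d₁ * ⟪p, X₁⟫ * ⟪p, X₂⟫ +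
      c₂ * ⟪P₁, P₂⟫ + d₂ * ⟪p, P₁⟫ * ⟪p, P₂⟫) :
    ∀ x y : V × V, G (J x) (J y) = G x y := by
  exact theorem9_hermitian_general (B := innerₗ V) ⟨isSymm_inner.eq⟩ hA.ne' ht.ne' hlam.ne' hc.ne'
    hden.ne' ((real_inner_self_eq_norm_sq p).trans hp) ha₁ hb₁ ha₂ hb₂ hc₁ hd₁ hc₂ hd₂ hJ hG
end

section
/- Let V be a real inner product space with dim V = n ≥ 2, let A, c, t, λ, λ₁ be real numbers with A > 0, t > 0, λ > 0, 2c − A²·t·λ² > 0 and λ + 2t·λ₁ > 0, and let p ∈ V with ‖p‖² = 2t. Define the symmetric bilinear form G on V × V by G((X₁,P₁),(X₂,P₂)) = c₁·⟨X₁,X₂⟩ + d₁·⟨p,X₁⟩·⟨p,X₂⟩ + c₂·⟨P₁,P₂⟩ + d₂·⟨p,P₁⟩·⟨p,P₂⟩ with c₁ = A·t·λ², d₁ = (c − A²·t·λ²)/(A·t), c₂ = 1/(A·t), d₂ = −(c − A²·t·(λ² + 2t·λ₁·(λ + t·λ₁)))/(A·t²·(2c − A²·t·λ²)). Then G is positive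 definite on V × V. -/
/-!
The horizontal and vertical factors are `G`-orthogonal, and on each of them `G` is a multiple `a` of
the inner product plus `d` times the square of `⟪p, ·⟫`, with eigenvalues `a` on the vectors
orthogonal to `p` and `a + d ‖p‖²` along `p`. Since `‖p‖² = 2t`, the eigenvalues along `p` are
`c₁ + 2t d₁ = (2c - A²tλ²) / A` and `c₂ + 2t d₂ = A (λ + 2tλ₁)² / (2c - A²tλ²)`.
-/

open RealInnerProductSpace

section RadialForm

variable {V : Type*} [SeminormedAddCommGroup V] [InnerProductSpace ℝ V]

/-- The restriction of a natural diagonal metric to the horizontal or the vertical factor: the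
quadratic form `a ‖x‖² + d ⟪p, x⟫²`, which is invariant under the isometries fixing `p`. -/
noncomputable def radialForm (p : V) (a d : ℝ) : QuadraticForm ℝ V :=
  a • LinearMap.BilinMap.toQuadraticMap (innerₗ V) +
    d • QuadraticMap.linMulLin (innerₗ V p) (innerₗ V p)

lemma radialForm_apply (p x : V) (a d : ℝ) :
    radialForm p a d x = a * ‖x‖ ^ 2 + d * ⟪p, x⟫ ^ 2 := by
  simp [radialForm, sq]

lemma real_inner_sq_le_norm_sq_mul_norm_sq (x y : V) : ⟪x, y⟫ ^ 2 ≤ ‖x‖ ^ 2 * ‖y‖ ^ 2 := by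
  simpa only [sq, real_inner_self_eq_norm_mul_norm] using real_inner_mul_inner_self_le x y

lemma min_mul_norm_sq_le_radialForm (p x : V) (a d : ℝ) :
    min a (a + d * ‖p‖ ^ 2) * ‖x‖ ^ 2 ≤ radialForm p a d x := by
  rw [radialForm_apply]
  rcases le_total 0 d with hd | hd
  · calc
      min a (a + d * ‖p‖ ^ 2) * ‖x‖ ^ 2 ≤ a * ‖x‖ ^ 2 := by gcongr; exact min_le_left _ _
      _ ≤ a * ‖x‖ ^ 2 + d * ⟪p, x⟫ ^ 2 := le_add_of_nonneg_right (by positivity)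
  · have cauchy_schwarz : d * (‖p‖ ^ 2 * ‖x‖ ^ 2) ≤ d * ⟪p, x⟫ ^ 2 :=
      mul_le_mul_of_nonpos_left (real_inner_sq_le_norm_sq_mul_norm_sq p x) hd
    calc
      min a (a + d * ‖p‖ ^ 2) * ‖x‖ ^ 2 ≤ (a + d * ‖p‖ ^ 2) * ‖x‖ ^ 2 := by
        gcongr; exact min_le_right _ _
      _ = a * ‖x‖ ^ 2 + d * (‖p‖ ^ 2 * ‖x‖ ^ 2) := by ring
      _ ≤ a * ‖x‖ ^ 2 + d * ⟪p, x⟫ ^ 2 := by gcongr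

end RadialForm

lemma radialForm_posDef {V : Type*} [NormedAddCommGroup V] [InnerProductSpace ℝ V]
    {p : V} {a d : ℝ} (ha : 0 < a) (had : 0 < a + d * ‖p‖ ^ 2) : (radialForm p a d).PosDef := by
  intro x hx
  calc
    0 < min a (a + d * ‖p‖ ^ 2) * ‖x‖ ^ 2 := mul_pos (lt_min ha had) (by positivity)
    _ ≤ radialForm p a d x := min_mul_norm_sq_le_radialForm p x a d

section RadialEigenvalues

variable {K : Type*} [Field K] {A t : K}

lemma horizontal_radial_eigenvalue_eq (hA : A ≠ 0) (ht : t ≠ 0) (c lam : K) :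
    A * t * lam ^ 2 + (c - A ^ 2 * t * lam ^ 2) / (A * t) * (2 * t) =
      (2 * c - A ^ 2 * t * lam ^ 2) / A := by
  field_simp
  ring

lemma vertical_radial_eigenvalue_eq (hA : A ≠ 0) (ht : t ≠ 0) {c lam : K}
    (hc : 2 * c - A ^ 2 * t * lam ^ 2 ≠ 0) (lam₁ : K) :
    1 / (A * t) +
        -(c - A ^ 2 * t * (lam ^ 2 + 2 * t * lam₁ * (lam + t * lam₁))) /
          (A * t ^ 2 * (2 * c - A ^ 2 * t * lam ^ 2)) * (2 * t) =
      A * (lam + 2 * t * lam₁) ^ 2 / (2 * c - A ^ 2 * t * lam ^ 2) := by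
  -- `field_simp` does not clear this denominator unless it is a variable.
  generalize hD : 2 * c - A ^ 2 * t * lam ^ 2 = D at hc ⊢
  field_simp
  rw [← hD]
  ring

end RadialEigenvalues

theorem formula24_positive_definite_general {V : Type*} [NormedAddCommGroup V]
    [InnerProductSpace ℝ V]
    (A c t lam lam₁ : ℝ) (hA : 0 < A) (ht : 0 < t) (hlam : lam ≠ 0)
    (hc : 0 < 2 * c - A ^ 2 * t * lam ^ 2) (hden : lam + 2 * t * lam₁ ≠ 0)
    (p : V) (hp : ‖p‖ ^ 2 = 2 * t)
    (c₁ d₁ c₂ d₂ : ℝ)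
    (hc₁ : c₁ = A * t * lam ^ 2)
    (hd₁ : d₁ = (c - A ^ 2 * t * lam ^ 2) / (A * t))
    (hc₂ : c₂ = 1 / (A * t))
    (hd₂ : d₂ = -(c - A ^ 2 * t * (lam ^ 2 + 2 * t * lam₁ * (lam + t * lam₁))) /
      (A * t ^ 2 * (2 * c - A ^ 2 * t * lam ^ 2)))
    (G : V × V → V × V → ℝ)
    (hG : ∀ X₁ P₁ X₂ P₂ : V, G (X₁, P₁) (X₂, P₂) =
      c₁ * ⟪X₁, X₂⟫ + d₁ * ⟪p, X₁⟫ * ⟪p, X₂⟫ +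
      c₂ * ⟪P₁, P₂⟫ + d₂ * ⟪p, P₁⟫ * ⟪p, P₂⟫) :
    ∀ z : V × V, z ≠ 0 → 0 < G z z := by
  have horizontal : (radialForm p c₁ d₁).PosDef := by
    apply radialForm_posDef
    · rw [hc₁]
      positivity
    · rw [hp, hc₁, hd₁, horizontal_radial_eigenvalue_eq hA.ne' ht.ne']
      positivity
  have vertical : (radialForm p c₂ d₂).PosDef := by
    apply radialForm_posDef
    · rw [hc₂]
      positivity
    · rw [hp, hc₂, hd₂, vertical_radial_eigenvalue_eq hA.ne' ht.ne' hc.ne']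
      positivity
  rintro ⟨X, P⟩ hXP
  have hG_self : G (X, P) (X, P) = (radialForm p c₁ d₁).prod (radialForm p c₂ d₂) (X, P) := by
    rw [hG, QuadraticMap.prod_apply, radialForm_apply, radialForm_apply,
      real_inner_self_eq_norm_sq, real_inner_self_eq_norm_sq]
    ring
  rw [hG_self]
  exact horizontal.prod vertical (X, P) hXP

/-- The Kähler metric `G` of formula (24) is positive definite on `V × V` under the
conditions (23) of the paper. -/
theorem formula24_positive_definite {V : Type*} [NormedAddCommGroup V]
    [InnerProductSpace ℝ V]
    (n : ℕ) (hn : 2 ≤ n) (hdim : Module.finrank ℝ V = n)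
    (A c t lam lam₁ : ℝ) (hA : 0 < A) (ht : 0 < t) (hlam : 0 < lam)
    (hc : 0 < 2 * c - A ^ 2 * t * lam ^ 2) (hden : 0 < lam + 2 * t * lam₁)
    (p : V) (hp : ‖p‖ ^ 2 = 2 * t)
    (c₁ d₁ c₂ d₂ : ℝ)
    (hc₁ : c₁ = A * t * lam ^ 2)
    (hd₁ : d₁ = (c - A ^ 2 * t * lam ^ 2) / (A * t))
    (hc₂ : c₂ = 1 / (A * t))
    (hd₂ : d₂ = -(c - A ^ 2 * t * (lam ^ 2 + 2 * t * lam₁ * (lam + t * lam₁))) /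
      (A * t ^ 2 * (2 * c - A ^ 2 * t * lam ^ 2)))
    (G : V × V → V × V → ℝ)
    (hG : ∀ X₁ P₁ X₂ P₂ : V, G (X₁, P₁) (X₂, P₂) =
      c₁ * ⟪X₁, X₂⟫ + d₁ * ⟪p, X₁⟫ * ⟪p, X₂⟫ +
      c₂ * ⟪P₁, P₂⟫ + d₂ * ⟪p, P₁⟫ * ⟪p, P₂⟫) :
    ∀ z : V × V, z ≠ 0 → 0 < G z z :=
  formula24_positive_definite_general A c t lam lam₁ hA ht hlam.ne' hc hden.ne' p hp
    c₁ d₁ c₂ d₂ hc₁ hd₁ hc₂ hd₂ G hG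
end
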